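/- arXiv:2103.06040 — 4 statements merged into one kernel-verified Lean document; each statement's English description precedes it below -/
import Mathlib

section
/- If there exists a set C ⊆ X^d_ℓ of size k with φ(P,C) ≤ Δ, then there exist k pairs of indices (i_1,j_1),…,(i_k,j_k) with 1 ≤ i_s < j_s ≤ m such that the set C' = {μ(i_1,j_1),…,μ(i_k,j_k)} ⊆ X^d_ℓ satisfies φ(P,C') ≤ 3Δ. In other words, restricting the candidate cluster centers to the simplifications μ(i,j) of subcurves between breakpoints loses at most a factor 3 in the clustering cost, with no increase in the number of centers. -/
/-!
Each center `Cc s` that serves some subcurve `P[t_i,t_j]` of the given cover is replaced by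
`μ(i,j)` for one such pair `(i,j)`; the cover itself is kept. As `Cc s` witnesses that `P[t_i,t_j]`
has a simplification within `Δ`, also `d_F(μ(i,j), P[t_i,t_j]) ≤ Δ`. Any other subcurve `P[t_a,t_b]`
served by `Cc s` then satisfies
`d_F(P[t_a,t_b], μ(i,j)) ≤ d_F(P[t_a,t_b], Cc s) + d_F(Cc s, P[t_i,t_j]) + d_F(P[t_i,t_j], μ(i,j))`,
which is at most `3Δ`.

The symmetry and triangle inequality of the Fréchet distance used here (`FrechetLE.symm`,
`FrechetLE.trans`) come from inverting and composing order automorphisms of `[0,1]`. Passing from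
`frechetDist` to such automorphisms requires the curves to be bounded, which holds for polygonal
curves and for subcurves of the continuous curve `P`.
-/

open Set

noncomputable section

/-- Points in `ℝ^d`. -/
abbrev Pt (d : ℕ) : Type := EuclideanSpace ℝ (Fin d)

/-- A reparametrization: a continuous strictly increasing bijection of `[0,1]` onto itself. -/
def IsReparam (γ : ℝ → ℝ) : Prop :=
  ContinuousOn γ (Icc 0 1) ∧ StrictMonoOn γ (Icc 0 1) ∧ γ '' Icc 0 1 = Icc 0 1

/-- The Fréchet distance `d_F(P,Q) = inf_γ sup_{t ∈ [0,1]} ‖P(γ(t)) - Q(t)‖`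
(only the values of the curves on `[0,1]` are relevant). -/
def frechetDist {d : ℕ} (P Q : ℝ → Pt d) : ℝ :=
  ⨅ γ : {γ : ℝ → ℝ // IsReparam γ}, ⨆ s : Icc (0:ℝ) 1, ‖P (γ.1 s.1) - Q s.1‖

/-- The linearly parametrized line segment from `a` to `b`. -/
def seg {d : ℕ} (a b : Pt d) : ℝ → Pt d := fun s => (1 - s) • a + s • b

/-- The subcurve `P[a,b]` of `P`, linearly reparametrized over `[0,1]`. -/
def subcurve {d : ℕ} (P : ℝ → Pt d) (a b : ℝ) : ℝ → Pt d := fun s => P (a + s * (b - a))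

/-- The polygonal curve with vertex sequence `pts 0, …, pts n`, uniformly
parametrized over `[0,1]`. -/
def polyline {d n : ℕ} (pts : Fin (n + 1) → Pt d) : ℝ → Pt d := fun s =>
  if h : n = 0 then pts 0
  else
    let i : ℕ := min ⌊s * n⌋₊ (n - 1)
    have hi : i < n := lt_of_le_of_lt (min_le_right _ _) (by omega)
    (1 - (s * n - i)) • pts ⟨i, hi.trans n.lt_succ_self⟩ +
      (s * n - i) • pts ⟨i + 1, Nat.succ_lt_succ hi⟩

/-- `f ∈ 𝕏^d_ℓ`: `f` is a polygonal curve with at most `ℓ` vertices. -/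
def IsPolygonal {d : ℕ} (f : ℝ → Pt d) (ℓ : ℕ) : Prop :=
  ∃ n : ℕ, n + 1 ≤ ℓ ∧ ∃ pts : Fin (n + 1) → Pt d, f = polyline pts

/-- Concatenation of two curves (each parametrized over `[0,1]`). -/
def concat {d : ℕ} (f g : ℝ → Pt d) : ℝ → Pt d := fun s =>
  if s ≤ 1 / 2 then f (2 * s) else g (2 * s - 1)

/-- `CostLE P m t C Δ` states that the clustering cost satisfies `φ(P,C) ≤ Δ`:
there is a family `I` of index pairs `(i,j)`, `1 ≤ i < j ≤ m`, with
`⋃_{(i,j) ∈ I} [t i, t j] = [0,1]`, such that every corresponding subcurve is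
within Fréchet distance `Δ` of some center in `C`. -/
def CostLE {d : ℕ} (P : ℝ → Pt d) (m : ℕ) (t : ℕ → ℝ) (C : Set (ℝ → Pt d)) (Δ : ℝ) : Prop :=
  ∃ I : Set (ℕ × ℕ),
    (∀ q ∈ I, 1 ≤ q.1 ∧ q.1 < q.2 ∧ q.2 ≤ m) ∧
    (⋃ q ∈ I, Icc (t q.1) (t q.2)) = Icc (0:ℝ) 1 ∧
    ∀ q ∈ I, ∃ c ∈ C, frechetDist (subcurve P (t q.1) (t q.2)) c ≤ Δ

/-- The set `r_Q` of the set system `R` (ground set `{1,…,m−1}`):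
`r_Q = {z : ∃ i ≤ z < j, d_F(Q, P[t_i,t_j]) ≤ Δ}`. -/
def rSet {d : ℕ} (P : ℝ → Pt d) (m : ℕ) (t : ℕ → ℝ) (Δ : ℝ) (Q : ℝ → Pt d) : Set ℕ :=
  {z | 1 ≤ z ∧ z < m ∧ ∃ i j, 1 ≤ i ∧ i ≤ z ∧ z < j ∧ j ≤ m ∧
    frechetDist Q (subcurve P (t i) (t j)) ≤ Δ}

/-- Boundedness on `[0,1]`. This keeps the real supremum in `frechetDist` from taking its junk
value `0`. -/
def BoundedCurve {d : ℕ} (f : ℝ → Pt d) : Prop := ∃ B : ℝ, ∀ s ∈ Icc (0:ℝ) 1, ‖f s‖ ≤ B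

/-- `f` and `g` are matched up to error `r + ε`, for every `ε > 0`, by an order automorphism of
`[0,1]`. For bounded curves this is equivalent to `frechetDist f g ≤ r`; order isomorphisms are
automatically continuous and have inverses and compositions at hand. -/
def FrechetLE {d : ℕ} (f g : ℝ → Pt d) (r : ℝ) : Prop :=
  ∀ ε > 0, ∃ e : Icc (0:ℝ) 1 ≃o Icc (0:ℝ) 1, ∀ s : Icc (0:ℝ) 1, ‖f (e s) - g s‖ ≤ r + ε

lemma IsReparam.exists_orderIso {γ : ℝ → ℝ} (h : IsReparam γ) :
    ∃ e : Icc (0:ℝ) 1 ≃o Icc (0:ℝ) 1, ∀ s : Icc (0:ℝ) 1, (e s : ℝ) = γ s :=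
  ⟨(h.2.1.orderIso γ (Icc 0 1)).trans (OrderIso.setCongr _ _ h.2.2), fun _ => rfl⟩

lemma isReparam_of_orderIso (e : Icc (0:ℝ) 1 ≃o Icc (0:ℝ) 1) :
    IsReparam (fun x => (e (projIcc 0 1 zero_le_one x) : ℝ)) := by
  refine ⟨?_, ?_, ?_⟩
  · exact (continuous_subtype_val.comp (e.continuous.comp continuous_projIcc)).continuousOn
  · intro x hx y hy hxy
    simp only [projIcc_of_mem _ hx, projIcc_of_mem _ hy]
    exact e.strictMono (show (⟨x, hx⟩ : Icc (0:ℝ) 1) < ⟨y, hy⟩ from hxy)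
  · ext y
    constructor
    · rintro ⟨x, _, rfl⟩
      exact (e _).2
    · intro hy
      refine ⟨e.symm ⟨y, hy⟩, (e.symm _).2, ?_⟩
      simp

lemma FrechetLE.of_frechetDist_le {d : ℕ} {f g : ℝ → Pt d} {r : ℝ}
    (hf : BoundedCurve f) (hg : BoundedCurve g) (h : frechetDist f g ≤ r) : FrechetLE f g r := by
  intro ε hε
  have : Nonempty {γ : ℝ → ℝ // IsReparam γ} := ⟨⟨_, isReparam_of_orderIso (OrderIso.refl _)⟩⟩
  obtain ⟨γ, hγ⟩ := exists_lt_of_ciInf_lt (lt_of_le_of_lt h (lt_add_of_pos_right r hε))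
  obtain ⟨e, he⟩ := γ.2.exists_orderIso
  obtain ⟨A, hA⟩ := hf
  obtain ⟨B, hB⟩ := hg
  have hbdd : BddAbove (range fun s : Icc (0:ℝ) 1 => ‖f (γ.1 s.1) - g s.1‖) := by
    refine ⟨A + B, ?_⟩
    rintro _ ⟨s, rfl⟩
    have h1 := hA _ (e s).2
    rw [he] at h1
    exact (norm_sub_le _ _).trans (add_le_add h1 (hB _ s.2))
  refine ⟨e, fun s => ?_⟩
  rw [he]
  exact (le_ciSup hbdd s).trans hγ.le

lemma FrechetLE.frechetDist_le {d : ℕ} {f g : ℝ → Pt d} {r : ℝ} (h : FrechetLE f g r) :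
    frechetDist f g ≤ r := by
  refine le_of_forall_pos_le_add fun ε hε => ?_
  obtain ⟨e, he⟩ := h ε hε
  have hbdd : BddBelow (range fun γ : {γ : ℝ → ℝ // IsReparam γ} =>
      ⨆ s : Icc (0:ℝ) 1, ‖f (γ.1 s.1) - g s.1‖) := by
    refine ⟨0, ?_⟩
    rintro _ ⟨γ, rfl⟩
    exact Real.iSup_nonneg fun s => norm_nonneg _
  refine (ciInf_le hbdd ⟨_, isReparam_of_orderIso e⟩).trans (ciSup_le fun s => ?_)
  simpa using he s

lemma FrechetLE.symm {d : ℕ} {f g : ℝ → Pt d} {r : ℝ} (h : FrechetLE f g r) :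
    FrechetLE g f r := by
  intro ε hε
  obtain ⟨e, he⟩ := h ε hε
  refine ⟨e.symm, fun s => ?_⟩
  have := he (e.symm s)
  rwa [e.apply_symm_apply, norm_sub_rev] at this

lemma FrechetLE.trans {d : ℕ} {f g h : ℝ → Pt d} {r r' : ℝ} (h₁ : FrechetLE f g r)
    (h₂ : FrechetLE g h r') : FrechetLE f h (r + r') := by
  intro ε hε
  obtain ⟨e, he⟩ := h₁ (ε / 2) (half_pos hε)
  obtain ⟨e', he'⟩ := h₂ (ε / 2) (half_pos hε)
  refine ⟨e'.trans e, fun s => ?_⟩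
  have h1 := he (e' s)
  have h2 := he' s
  have h3 := norm_sub_le_norm_sub_add_norm_sub (f (e (e' s))) (g (e' s)) (h s)
  simp only [OrderIso.trans_apply]
  linarith

lemma IsPolygonal.boundedCurve {d ℓ : ℕ} {f : ℝ → Pt d} (hf : IsPolygonal f ℓ) :
    BoundedCurve f := by
  obtain ⟨n, -, pts, rfl⟩ := hf
  obtain ⟨S, hS⟩ := (finite_range fun i => ‖pts i‖).bddAbove
  have hpts : ∀ i, ‖pts i‖ ≤ S := fun i => hS ⟨i, rfl⟩
  have hS0 : 0 ≤ S := (norm_nonneg _).trans (hpts 0)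
  -- A crude bound suffices: both coefficients of `polyline` have modulus at most `n + 1`.
  refine ⟨(n + 1) * S + (n + 1) * S, fun s hs => ?_⟩
  have hn0 : (0:ℝ) ≤ n := n.cast_nonneg
  unfold polyline
  split_ifs with h
  · have := hpts 0
    nlinarith
  · have hi : ((min ⌊s * n⌋₊ (n - 1) : ℕ) : ℝ) ≤ n := by
      exact_mod_cast (min_le_right _ _).trans (Nat.sub_le n 1)
    have hi0 : (0:ℝ) ≤ ((min ⌊s * n⌋₊ (n - 1) : ℕ) : ℝ) := Nat.cast_nonneg _
    have hsn0 : 0 ≤ s * n := mul_nonneg hs.1 hn0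
    have hsn : s * n ≤ n := mul_le_of_le_one_left hn0 hs.2
    refine (norm_add_le _ _).trans (add_le_add ?_ ?_) <;> rw [norm_smul, Real.norm_eq_abs] <;>
      refine mul_le_mul ?_ (hpts _) (norm_nonneg _) (by positivity) <;>
      rw [abs_le] <;> constructor <;> linarith

lemma boundedCurve_subcurve {d : ℕ} {P : ℝ → Pt d} (hP : ContinuousOn P (Icc 0 1)) {a b : ℝ}
    (ha : a ∈ Icc (0:ℝ) 1) (hb : b ∈ Icc (0:ℝ) 1) : BoundedCurve (subcurve P a b) := by
  obtain ⟨B, hB⟩ := isCompact_Icc.exists_bound_of_continuousOn hP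
  refine ⟨B, fun s hs => hB _ ?_⟩
  have := (convex_Icc (0:ℝ) 1).add_smul_sub_mem ha hb hs
  simpa using this

/-- Restricting cluster centers to the simplifications `μ(i,j)` of
subcurves between breakpoints loses at most a factor `3` in the clustering cost,
with no increase in the number of centers. -/
theorem stmt5 {d ℓ : ℕ} (P : ℝ → Pt d) (hP : ContinuousOn P (Icc 0 1))
    (m : ℕ) (hm : 2 ≤ m) (t : ℕ → ℝ) (ht0 : t 1 = 0) (ht1 : t m = 1)
    (htmono : ∀ i, 1 ≤ i → i < m → t i < t (i + 1))
    (Δ : ℝ) (hΔ : 0 < Δ) (μ : ℕ → ℕ → ℝ → Pt d)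
    (hμpoly : ∀ i j, 1 ≤ i → i < j → j ≤ m → IsPolygonal (μ i j) ℓ)
    (hμ : ∀ i j, 1 ≤ i → i < j → j ≤ m →
      (∃ Q, IsPolygonal Q ℓ ∧ frechetDist Q (subcurve P (t i) (t j)) ≤ Δ) →
      frechetDist (μ i j) (subcurve P (t i) (t j)) ≤ Δ)
    (k : ℕ) (Cc : Fin k → ℝ → Pt d)
    (hCpoly : ∀ s, IsPolygonal (Cc s) ℓ)
    (hCcost : CostLE P m t {f | ∃ s, f = Cc s} Δ) :
    ∃ ij : Fin k → ℕ × ℕ,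
      (∀ s, 1 ≤ (ij s).1 ∧ (ij s).1 < (ij s).2 ∧ (ij s).2 ≤ m) ∧
      CostLE P m t {f | ∃ s, f = μ (ij s).1 (ij s).2} (3 * Δ) := by
  classical
  obtain ⟨I, hI, hcov, hIC⟩ := hCcost
  have hmono : ∀ i j, 1 ≤ i → i ≤ j → j ≤ m → t i ≤ t j := by
    intro i j hi hij
    induction j, hij using Nat.le_induction with
    | base => exact fun _ => le_rfl
    | succ j hij ih => exact fun hj => (ih (by omega)).trans (htmono j (by omega) (by omega)).le
  have hmem : ∀ i, 1 ≤ i → i ≤ m → t i ∈ Icc (0:ℝ) 1 := fun i h1 h2 =>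
    ⟨ht0 ▸ hmono 1 i le_rfl h1 h2, ht1 ▸ hmono i m h1 h2 le_rfl⟩
  have hsub : ∀ q ∈ I, BoundedCurve (subcurve P (t q.1) (t q.2)) := fun q hq => by
    obtain ⟨h1, h2, h3⟩ := hI q hq
    exact boundedCurve_subcurve hP (hmem _ h1 (by omega)) (hmem _ (by omega) h3)
  -- Centers serving no subcurve of the cover receive the arbitrary valid pair `(1, 2)`.
  have hch : ∀ s : Fin k, ∃ p : ℕ × ℕ, (1 ≤ p.1 ∧ p.1 < p.2 ∧ p.2 ≤ m) ∧
      ((∃ q ∈ I, frechetDist (subcurve P (t q.1) (t q.2)) (Cc s) ≤ Δ) →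
        p ∈ I ∧ frechetDist (subcurve P (t p.1) (t p.2)) (Cc s) ≤ Δ) := by
    intro s
    by_cases h : ∃ q ∈ I, frechetDist (subcurve P (t q.1) (t q.2)) (Cc s) ≤ Δ
    · obtain ⟨q, hq, hd⟩ := h
      exact ⟨q, hI q hq, fun _ => ⟨hq, hd⟩⟩
    · exact ⟨(1, 2), ⟨le_rfl, one_lt_two, hm⟩, fun h' => absurd h' h⟩
  choose ij hij hsel using hch
  refine ⟨ij, hij, I, hI, hcov, fun q hq => ?_⟩
  obtain ⟨_, ⟨s, rfl⟩, hqs⟩ := hIC q hq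
  obtain ⟨hpI, hps⟩ := hsel s ⟨q, hq, hqs⟩
  refine ⟨_, ⟨s, rfl⟩, ?_⟩
  obtain ⟨h1, h2, h3⟩ := hij s
  have hC := (hCpoly s).boundedCurve
  have hqC := FrechetLE.of_frechetDist_le (hsub q hq) hC hqs
  have hCp := (FrechetLE.of_frechetDist_le (hsub _ hpI) hC hps).symm
  have hμp := (FrechetLE.of_frechetDist_le (hμpoly _ _ h1 h2 h3).boundedCurve (hsub _ hpI)
    (hμ _ _ h1 h2 h3 ⟨Cc s, hCpoly s, hCp.frechetDist_le⟩)).symm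
  have := ((hqC.trans hCp).trans hμp).frechetDist_le
  linarith
end
end

section
/- Monotonicity of shortcut quality: let 1 ≤ i' ≤ i ≤ j ≤ j' ≤ m be indices and α ≥ 0. If d_F(τ_{i',j'}, P[t_{i'}, t_{j'}]) ≤ α, then d_F(τ_{i,j}, P[t_i, t_j]) ≤ 2α. -/
/-!
If `γ` matches the long segment `σ` to `P[t i', t j']` within `β`, then `γ` restricted to the
parameters of `P[t i, t j]` matches a sub-segment of `σ`, with endpoints `σ (γ a)` and `σ (γ b)`,
to `P[t i, t j]` within `β`. The endpoints of this sub-segment are within `β` of `P (t i)` and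
`P (t j)`, so by convexity of the norm the shortcut from `P (t i)` to `P (t j)` is pointwise within
`β` of the sub-segment. The triangle inequality gives `2 * β` (`exists_reparam_restrict`), and
letting `β` decrease to `α` gives the claim. The limit is needed because the infimum over
reparametrizations need not be attained.
-/

open Set

noncomputable section

theorem isReparam_id : IsReparam (fun s => s) :=
  ⟨continuousOn_id, fun _ _ _ _ hxy => hxy, by simp⟩

theorem frechetDist_le_of_reparam {d : ℕ} {f g : ℝ → Pt d} {c : ℝ} {γ : ℝ → ℝ}
    (hγ : IsReparam γ) (hc : ∀ s ∈ Icc (0:ℝ) 1, ‖f (γ s) - g s‖ ≤ c) :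
    frechetDist f g ≤ c := by
  have : Nonempty (Icc (0:ℝ) 1) := ⟨⟨0, by simp⟩⟩
  refine (ciInf_le ⟨0, ?_⟩ (⟨γ, hγ⟩ : {γ : ℝ → ℝ // IsReparam γ})).trans
    (ciSup_le fun s => hc s.1 s.2)
  rintro _ ⟨γ, rfl⟩
  exact Real.iSup_nonneg fun _ => norm_nonneg _

/-- Continuity guarantees that the suprema in `frechetDist` are over bounded sets, so that a bound
on the distance yields genuine pointwise bounds. -/
theorem exists_reparam_of_frechetDist_lt {d : ℕ} {f g : ℝ → Pt d} {c : ℝ}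
    (hf : ContinuousOn f (Icc 0 1)) (hg : ContinuousOn g (Icc 0 1)) (h : frechetDist f g < c) :
    ∃ γ, IsReparam γ ∧ ∀ s ∈ Icc (0:ℝ) 1, ‖f (γ s) - g s‖ ≤ c := by
  have : Nonempty {γ : ℝ → ℝ // IsReparam γ} := ⟨⟨_, isReparam_id⟩⟩
  obtain ⟨⟨γ, hγ⟩, hlt⟩ := exists_lt_of_ciInf_lt h
  refine ⟨γ, hγ, fun s hs => ?_⟩
  have hmaps : MapsTo γ (Icc 0 1) (Icc 0 1) := fun x hx => hγ.2.2 ▸ mem_image_of_mem γ hx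
  have hcont : ContinuousOn (fun s => ‖f (γ s) - g s‖) (Icc 0 1) :=
    ((hf.comp hγ.1 hmaps).sub hg).norm
  have hbdd : BddAbove (range fun s : Icc (0:ℝ) 1 => ‖f (γ s.1) - g s.1‖) := by
    refine (isCompact_Icc.bddAbove_image hcont).mono ?_
    rintro _ ⟨s, rfl⟩
    exact ⟨s.1, s.2, rfl⟩
  exact (le_ciSup hbdd ⟨s, hs⟩).trans hlt.le

theorem norm_seg_sub_seg_le {d : ℕ} {a b a' b' : Pt d} {c s : ℝ} (hs : s ∈ Icc (0:ℝ) 1)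
    (ha : ‖a - a'‖ ≤ c) (hb : ‖b - b'‖ ≤ c) : ‖seg a b s - seg a' b' s‖ ≤ c := by
  have e : seg a b s - seg a' b' s = (1 - s) • (a - a') + s • (b - b') := by
    simp only [seg]; module
  rw [e]
  refine (norm_add_le _ _).trans ?_
  rw [norm_smul, norm_smul, Real.norm_of_nonneg hs.1, Real.norm_of_nonneg (sub_nonneg.2 hs.2)]
  nlinarith [mul_le_mul_of_nonneg_left ha (sub_nonneg.2 hs.2), mul_le_mul_of_nonneg_left hb hs.1]

/-- A matching of a segment with `Q` within `β` restricts to a matching, within `2 * β`, of the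
shortcut from `Q a` to `Q b` with the subcurve of `Q` on `[a, b]`. -/
theorem exists_reparam_restrict {d : ℕ} {x y : Pt d} {Q : ℝ → Pt d} {γ : ℝ → ℝ} {β a b : ℝ}
    (hγ : IsReparam γ) (hQ : ∀ s ∈ Icc (0:ℝ) 1, ‖seg x y (γ s) - Q s‖ ≤ β)
    (ha : 0 ≤ a) (hab : a < b) (hb : b ≤ 1) :
    ∃ δ, IsReparam δ ∧
      ∀ s ∈ Icc (0:ℝ) 1, ‖seg (Q a) (Q b) (δ s) - Q (a + s * (b - a))‖ ≤ 2 * β := by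
  have haI : a ∈ Icc (0:ℝ) 1 := ⟨ha, hab.le.trans hb⟩
  have hbI : b ∈ Icc (0:ℝ) 1 := ⟨ha.trans hab.le, hb⟩
  have hD : 0 < γ b - γ a := sub_pos.2 (hγ.2.1 haI hbI hab)
  have hmaps : MapsTo (fun s => a + s * (b - a)) (Icc (0:ℝ) 1) (Icc 0 1) := by
    rintro s ⟨hs0, hs1⟩
    constructor <;> nlinarith
  -- The restriction of `γ` to `[a, b]`, rescaled affinely on both sides to `[0, 1]`.
  let δ : ℝ → ℝ := fun s => (γ (a + s * (b - a)) - γ a) / (γ b - γ a)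
  have hδ0 : δ 0 = 0 := by simp [δ]
  have hδ1 : δ 1 = 1 := by simp [δ, hD.ne']
  have hδc : ContinuousOn δ (Icc 0 1) :=
    ((hγ.1.comp (by fun_prop) hmaps).sub continuousOn_const).div_const _
  have hδm : StrictMonoOn δ (Icc 0 1) := by
    intro u hu v hv huv
    have : γ (a + u * (b - a)) < γ (a + v * (b - a)) :=
      hγ.2.1 (hmaps hu) (hmaps hv) (by nlinarith)
    exact div_lt_div_of_pos_right (by linarith) hD
  have hδI : ∀ s ∈ Icc (0:ℝ) 1, δ s ∈ Icc (0:ℝ) 1 := fun s hs =>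
    ⟨hδ0 ▸ hδm.monotoneOn (by simp) hs hs.1, hδ1 ▸ hδm.monotoneOn hs (by simp) hs.2⟩
  refine ⟨δ, ⟨hδc, hδm, Subset.antisymm (image_subset_iff.2 hδI) ?_⟩, fun s hs => ?_⟩
  · have := intermediate_value_Icc zero_le_one hδc
    rwa [hδ0, hδ1] at this
  · have e : seg (seg x y (γ a)) (seg x y (γ b)) (δ s) = seg x y (γ (a + s * (b - a))) := by
      have hg : γ (a + s * (b - a)) = γ a + δ s * (γ b - γ a) := by
        simp only [δ]; field_simp; ring
      rw [hg]; simp only [seg]; module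
    have hshort := norm_seg_sub_seg_le (hδI s hs)
      ((norm_sub_rev _ _).trans_le (hQ a haI)) ((norm_sub_rev _ _).trans_le (hQ b hbI))
    rw [e] at hshort
    have := norm_sub_le_norm_sub_add_norm_sub (seg (Q a) (Q b) (δ s))
      (seg x y (γ (a + s * (b - a)))) (Q (a + s * (b - a)))
    linarith [hQ _ (hmaps hs)]

/-- Monotonicity of shortcut quality. -/
theorem stmt6 {d : ℕ} (P : ℝ → Pt d) (hP : ContinuousOn P (Icc 0 1))
    (m : ℕ) (hm : 2 ≤ m) (t : ℕ → ℝ) (ht0 : t 1 = 0) (ht1 : t m = 1)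
    (htmono : ∀ i, 1 ≤ i → i < m → t i < t (i + 1))
    (i' i j j' : ℕ) (h1 : 1 ≤ i') (h2 : i' ≤ i) (h3 : i ≤ j) (h4 : j ≤ j') (h5 : j' ≤ m)
    (α : ℝ) (hα : 0 ≤ α)
    (h : frechetDist (seg (P (t i')) (P (t j'))) (subcurve P (t i') (t j')) ≤ α) :
    frechetDist (seg (P (t i)) (P (t j))) (subcurve P (t i) (t j)) ≤ 2 * α := by
  have hmono : StrictMonoOn t (Icc 1 m) :=
    strictMonoOn_of_lt_add_one ordConnected_Icc fun k _ hk hk' => htmono k hk.1 hk'.2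
  have hi' : i' ∈ Icc 1 m := ⟨h1, by omega⟩
  have hi : i ∈ Icc 1 m := ⟨by omega, by omega⟩
  have hj : j ∈ Icc 1 m := ⟨by omega, by omega⟩
  have hj' : j' ∈ Icc 1 m := ⟨by omega, h5⟩
  rcases h3.eq_or_lt with rfl | hij
  · refine frechetDist_le_of_reparam isReparam_id fun s _ => ?_
    have e : seg (P (t i)) (P (t i)) s - subcurve P (t i) (t i) s = 0 := by
      simp only [seg, subcurve, sub_self, mul_zero, add_zero]; module
    rw [e, norm_zero]
    positivity
  have e1 : t i' ≤ t i := hmono.monotoneOn hi' hi h2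
  have e2 : t i < t j := hmono hi hj hij
  have e3 : t j ≤ t j' := hmono.monotoneOn hj hj' h4
  have e0 : 0 ≤ t i' := ht0 ▸ hmono.monotoneOn ⟨le_rfl, by omega⟩ hi' h1
  have e4 : t j' ≤ 1 := ht1 ▸ hmono.monotoneOn hj' ⟨by omega, le_rfl⟩ h5
  have hL : 0 < t j' - t i' := by linarith
  have hQc : ContinuousOn (subcurve P (t i') (t j')) (Icc 0 1) := by
    refine hP.comp (by fun_prop) ?_
    rintro s ⟨hs0, hs1⟩
    constructor <;> nlinarith
  have hsc : ContinuousOn (seg (P (t i')) (P (t j'))) (Icc 0 1) := by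
    unfold seg; fun_prop
  refine le_of_forall_pos_le_add fun ε hε => ?_
  obtain ⟨γ, hγ, hb⟩ := exists_reparam_of_frechetDist_lt hsc hQc
    (lt_of_le_of_lt h (by linarith : α < α + ε / 2))
  -- `a` and `b` are the parameters of `P (t i)` and `P (t j)` on the subcurve `P[t i', t j']`.
  obtain ⟨a, ha⟩ : ∃ a, a = (t i - t i') / (t j' - t i') := ⟨_, rfl⟩
  obtain ⟨b, hb'⟩ : ∃ b, b = (t j - t i') / (t j' - t i') := ⟨_, rfl⟩
  have ha' : t i' + a * (t j' - t i') = t i := by rw [ha]; field_simp; ring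
  have hb'' : t i' + b * (t j' - t i') = t j := by rw [hb']; field_simp; ring
  obtain ⟨δ, hδ, hd⟩ := exists_reparam_restrict (a := a) (b := b) hγ hb
    (ha ▸ div_nonneg (by linarith) hL.le)
    (ha ▸ hb' ▸ div_lt_div_of_pos_right (by linarith) hL)
    (hb' ▸ (div_le_one hL).2 (by linarith))
  refine frechetDist_le_of_reparam hδ fun s hs => ?_
  have key := hd s hs
  have e5 : t i' + (a + s * (b - a)) * (t j' - t i') = t i + s * (t j - t i) := by
    rw [← ha', ← hb'']; ring
  simp only [subcurve, ha', hb'', e5] at key ⊢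
  linarith
end
end

section
/- Free-space characterization for a 3-segment polyline against a segment: let p, a, b, q, u, v ∈ ℝ^d, let π be the polygonal curve with vertex sequence p, a, b, q (concatenation of the three segments), and let τ be the linearly parametrized segment from u to v. Then d_F(π, τ) ≤ 2Δ if and only if the following three conditions hold: (i) ‖p − u‖ ≤ 2Δ; (ii) ‖q − v‖ ≤ 2Δ; (iii) there exist λ, λ' ∈ [0,1] with λ ≤ λ' such that ‖a − ((1−λ)u + λv)‖ ≤ 2Δ and ‖b − ((1−λ')u + λ'v)‖ ≤ 2Δ. -/
/-!
If `d_F ≤ 2Δ`, then for each `ε > 0` some reparametrization `γ` stays within `2Δ + ε`; evaluating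
at `0`, `1` and at the preimages under `γ` of `1/3` and `2/3` (the parameters of the vertices `a`
and `b`) yields the three conditions with `2Δ + ε` in place of `2Δ`. The slack is removed by
compactness: the maximum of the two distances in (iii) attains its minimum on
`{0 ≤ λ ≤ λ' ≤ 1}`.

Conversely, given `λ ≤ λ'`, these parameters may coincide or lie on the boundary of `[0,1]`, so
that the piecewise linear map matching the vertices need not be a bijection. They are pushed
towards `1/3` and `2/3` by a factor `η`, giving `0 < x₁ < x₂ < 1` and a piecewise linear `γ` with
`γ x₁ = 1/3`, `γ x₂ = 2/3` (`exists_reparam`). On each of the three pieces the difference of the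
two curves is affine, so its norm is at most the maximum at the endpoints (`affine_bound`), which
is at most `2Δ + η ‖v - u‖`. Then `η → 0`.
-/

open Set

noncomputable section

/-! ### The polygonal curve with three edges -/

lemma polyline3_of_floor {d : ℕ} (pts : Fin 4 → Pt d) (s : ℝ) (i : ℕ)
    (h : min ⌊s * 3⌋₊ 2 = i) (hi : i < 3) :
    polyline (n := 3) pts s =
      (1 - (s * 3 - i)) • pts ⟨i, by omega⟩ + (s * 3 - i) • pts ⟨i + 1, by omega⟩ := by
  subst h
  simp [polyline]

/-- The formula for the `i`-th edge holds on the closed parameter interval; at its right end the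
floor in `polyline` jumps to `i + 1`, where the next edge starts at the same vertex. -/
lemma polyline3_edge {d : ℕ} (pts : Fin 4 → Pt d) (i : ℕ) (hi : i < 3) (θ : ℝ)
    (h0 : 0 ≤ θ) (h1 : θ ≤ 1) :
    polyline (n := 3) pts ((i + θ) / 3) =
      (1 - θ) • pts ⟨i, by omega⟩ + θ • pts ⟨i + 1, by omega⟩ := by
  have e : ((i : ℝ) + θ) / 3 * 3 = i + θ := by ring
  rcases h1.lt_or_eq with h | rfl
  · have hf : ⌊((i : ℝ) + θ) / 3 * 3⌋₊ = i := by
      rw [e, Nat.floor_eq_iff (by positivity)]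
      constructor <;> linarith
    rw [polyline3_of_floor pts _ i (by rw [hf]; omega) hi, e]
    simp
  · have hf : ⌊((i : ℝ) + 1) / 3 * 3⌋₊ = i + 1 := by
      rw [e]; exact_mod_cast Nat.floor_natCast (i + 1)
    by_cases h2 : i = 2
    · subst h2
      rw [polyline3_of_floor pts _ 2 (by rw [hf]; rfl) hi, e]
      simp
    · rw [polyline3_of_floor pts _ (i + 1) (by rw [hf]; omega) (by omega), e]
      simp

lemma exists_edge {s : ℝ} (hs : s ∈ Icc (0:ℝ) 1) :
    ∃ i : ℕ, i < 3 ∧ ∃ θ : ℝ, 0 ≤ θ ∧ θ ≤ 1 ∧ s = (i + θ) / 3 := by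
  obtain ⟨h0, h1⟩ := hs
  rcases le_total s (1/3) with h | h
  · exact ⟨0, by norm_num, 3 * s, by linarith, by linarith, by push_cast; ring⟩
  rcases le_total s (2/3) with h' | h'
  · exact ⟨1, by norm_num, 3 * s - 1, by linarith, by linarith, by push_cast; ring⟩
  · exact ⟨2, by norm_num, 3 * s - 2, by linarith, by linarith, by push_cast; ring⟩

lemma norm_combo_le {d : ℕ} {x y : Pt d} {θ C : ℝ} (h0 : 0 ≤ θ) (h1 : θ ≤ 1)
    (hx : ‖x‖ ≤ C) (hy : ‖y‖ ≤ C) : ‖(1 - θ) • x + θ • y‖ ≤ C := by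
  have := convex_closedBall (0 : Pt d) C (mem_closedBall_zero_iff.2 hx)
    (mem_closedBall_zero_iff.2 hy) (sub_nonneg.2 h1) h0 (by ring)
  exact mem_closedBall_zero_iff.1 this

/-- Distances between two simultaneously traversed segments are controlled by the endpoints. -/
lemma affine_bound {d : ℕ} {u v x y : Pt d} {s t θ C : ℝ} (h0 : 0 ≤ θ) (h1 : θ ≤ 1)
    (hx : ‖x - seg u v s‖ ≤ C) (hy : ‖y - seg u v t‖ ≤ C) :
    ‖((1 - θ) • x + θ • y) - seg u v ((1 - θ) * s + θ * t)‖ ≤ C := by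
  have := norm_combo_le h0 h1 hx hy
  convert this using 2
  simp only [seg]
  module

/-- Without this bound the supremum in `frechetDist` would be the junk value `0`. -/
lemma bddAbove_dist {d : ℕ} (pts : Fin 4 → Pt d) (u v : Pt d) {γ : ℝ → ℝ} (hγ : IsReparam γ) :
    BddAbove (range fun s : Icc (0:ℝ) 1 => ‖polyline (n := 3) pts (γ s.1) - seg u v s.1‖) := by
  refine ⟨(∑ i, ‖pts i‖) + (‖u‖ + ‖v‖), ?_⟩
  rintro _ ⟨⟨s, hs⟩, rfl⟩
  have hm : γ s ∈ Icc (0:ℝ) 1 := hγ.2.2 ▸ mem_image_of_mem γ hs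
  have hb (i : Fin 4) : ‖pts i‖ ≤ ∑ i, ‖pts i‖ :=
    Finset.single_le_sum (f := fun i => ‖pts i‖) (fun _ _ => norm_nonneg _) (Finset.mem_univ i)
  obtain ⟨i, hi, θ, h0, h1, e⟩ := exists_edge hm
  have hP : ‖polyline (n := 3) pts (γ s)‖ ≤ ∑ i, ‖pts i‖ := by
    rw [e, polyline3_edge pts i hi θ h0 h1]
    exact norm_combo_le h0 h1 (hb _) (hb _)
  have hQ : ‖seg u v s‖ ≤ ‖u‖ + ‖v‖ :=
    norm_combo_le hs.1 hs.2 (by linarith [norm_nonneg v]) (by linarith [norm_nonneg u])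
  exact (norm_sub_le _ _).trans (add_le_add hP hQ)

/-! ### Reparametrizations -/

lemma IsReparam.map_zero {γ : ℝ → ℝ} (h : IsReparam γ) : γ 0 = 0 := by
  have h0 : (0:ℝ) ∈ Icc (0:ℝ) 1 := by simp
  obtain ⟨t, ht, e⟩ : (0:ℝ) ∈ γ '' Icc 0 1 := by rw [h.2.2]; exact h0
  have h1 : γ 0 ∈ Icc (0:ℝ) 1 := h.2.2 ▸ mem_image_of_mem γ h0
  exact le_antisymm (e ▸ h.2.1.monotoneOn h0 ht ht.1) h1.1

lemma IsReparam.map_one {γ : ℝ → ℝ} (h : IsReparam γ) : γ 1 = 1 := by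
  have h0 : (1:ℝ) ∈ Icc (0:ℝ) 1 := by simp
  obtain ⟨t, ht, e⟩ : (1:ℝ) ∈ γ '' Icc 0 1 := by rw [h.2.2]; exact h0
  have h1 : γ 1 ∈ Icc (0:ℝ) 1 := h.2.2 ▸ mem_image_of_mem γ h0
  exact le_antisymm h1.2 (by simpa [e] using h.2.1.monotoneOn ht h0 ht.2)

/-- The piecewise linear reparametrization through `(x₁, 1/3)` and `(x₂, 2/3)`. -/
lemma exists_reparam {x₁ x₂ : ℝ} (h1 : 0 < x₁) (h2 : x₁ < x₂) (h3 : x₂ < 1) :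
    ∃ γ : ℝ → ℝ, IsReparam γ ∧ ∀ θ : ℝ, 0 ≤ θ → θ ≤ 1 →
      γ ((1 - θ) * 0 + θ * x₁) = ((0 : ℕ) + θ) / 3 ∧
      γ ((1 - θ) * x₁ + θ * x₂) = ((1 : ℕ) + θ) / 3 ∧
      γ ((1 - θ) * x₂ + θ * 1) = ((2 : ℕ) + θ) / 3 := by
  -- slopes of the three pieces
  obtain ⟨r₁, p₁, e₁⟩ : ∃ r : ℝ, 0 < r ∧ r * x₁ = 1 / 3 :=
    ⟨1 / 3 / x₁, by positivity, by field_simp⟩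
  obtain ⟨r₂, p₂, e₂⟩ : ∃ r : ℝ, 0 < r ∧ r * (x₂ - x₁) = 1 / 3 :=
    ⟨1 / 3 / (x₂ - x₁), by have := sub_pos.2 h2; positivity, by
      have := (sub_pos.2 h2).ne'; field_simp⟩
  obtain ⟨r₃, p₃, e₃⟩ : ∃ r : ℝ, 0 < r ∧ r * (1 - x₂) = 1 / 3 :=
    ⟨1 / 3 / (1 - x₂), by have := sub_pos.2 h3; positivity, by
      have := (sub_pos.2 h3).ne'; field_simp⟩
  let γ : ℝ → ℝ := fun t =>
    if t ≤ x₁ then r₁ * t else if t ≤ x₂ then 1 / 3 + r₂ * (t - x₁) else 2 / 3 + r₃ * (t - x₂)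
  have hA (t : ℝ) (h : t ≤ x₁) : γ t = r₁ * t := if_pos h
  have hB (t : ℝ) (h : x₁ ≤ t) (h' : t ≤ x₂) : γ t = 1 / 3 + r₂ * (t - x₁) := by
    rcases h.eq_or_lt with rfl | h
    · rw [hA _ le_rfl, e₁]; ring
    · simp only [γ]; rw [if_neg (not_le.2 h), if_pos h']
  have hC (t : ℝ) (h : x₂ ≤ t) : γ t = 2 / 3 + r₃ * (t - x₂) := by
    rcases h.eq_or_lt with rfl | h
    · rw [hB _ h2.le le_rfl, e₂]; ring
    · simp only [γ]; rw [if_neg (not_le.2 (h2.trans h)), if_neg (not_le.2 h)]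
  have hcont : Continuous γ := by
    refine Continuous.if_le (by fun_prop) (Continuous.if_le (by fun_prop) (by fun_prop)
      continuous_id continuous_const ?_) continuous_id continuous_const ?_
    · rintro t rfl; linarith
    · rintro t rfl; rw [if_pos h2.le, e₁]; ring
  have hmono : StrictMono γ := by
    have m1 : StrictMonoOn γ (Iic x₁) := by
      intro s hs t ht hst
      rw [hA s hs, hA t ht]; nlinarith
    have m2 : StrictMonoOn γ (Icc x₁ x₂) := by
      intro s hs t ht hst
      rw [hB s hs.1 hs.2, hB t ht.1 ht.2]; nlinarith
    have m3 : StrictMonoOn γ (Ici x₂) := by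
      intro s hs t ht hst
      rw [hC s hs, hC t ht]; nlinarith
    have m12 : StrictMonoOn γ (Iic x₂) := by
      rw [← Iic_union_Icc_eq_Iic h2.le]
      exact m1.union m2 isGreatest_Iic (isLeast_Icc h2.le)
    exact m12.Iic_union_Ici m3
  have g0 : γ 0 = 0 := by rw [hA 0 h1.le]; ring
  have g1 : γ 1 = 1 := by rw [hC 1 h3.le, e₃]; norm_num
  refine ⟨γ, ⟨hcont.continuousOn, hmono.strictMonoOn _, ?_⟩, ?_⟩
  · apply Subset.antisymm
    · rintro _ ⟨t, ht, rfl⟩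
      exact ⟨g0 ▸ hmono.monotone ht.1, by simpa [g1] using hmono.monotone ht.2⟩
    · have := intermediate_value_Icc (zero_le_one' ℝ) hcont.continuousOn
      rwa [g0, g1] at this
  · intro θ t0 t1
    refine ⟨?_, ?_, ?_⟩
    · rw [hA _ (by nlinarith)]; push_cast; linear_combination θ * e₁
    · rw [hB _ (by nlinarith) (by nlinarith)]; push_cast; linear_combination θ * e₂
    · rw [hC _ (by nlinarith)]; push_cast; linear_combination θ * e₃

lemma exists_piece {x₁ x₂ s : ℝ} (h1 : 0 < x₁) (h2 : x₁ < x₂) (h3 : x₂ < 1)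
    (hs : s ∈ Icc (0:ℝ) 1) : ∃ θ : ℝ, 0 ≤ θ ∧ θ ≤ 1 ∧
      (s = (1 - θ) * 0 + θ * x₁ ∨ s = (1 - θ) * x₁ + θ * x₂ ∨ s = (1 - θ) * x₂ + θ * 1) := by
  have key (x y : ℝ) (hxy : x < y) (hx : x ≤ s) (hy : s ≤ y) :
      ∃ θ : ℝ, 0 ≤ θ ∧ θ ≤ 1 ∧ s = (1 - θ) * x + θ * y := by
    have hp := sub_pos.2 hxy
    refine ⟨(s - x) / (y - x), div_nonneg (by linarith) hp.le, (div_le_one hp).2 (by linarith), ?_⟩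
    have := hp.ne'
    field_simp
    ring
  rcases le_total s x₁ with h | h
  · obtain ⟨θ, a, b, c⟩ := key 0 x₁ h1 hs.1 h
    exact ⟨θ, a, b, .inl c⟩
  rcases le_total s x₂ with h' | h'
  · obtain ⟨θ, a, b, c⟩ := key x₁ x₂ h2 h h'
    exact ⟨θ, a, b, .inr (.inl c)⟩
  · obtain ⟨θ, a, b, c⟩ := key x₂ 1 h3 h' hs.2
    exact ⟨θ, a, b, .inr (.inr c)⟩

/-! ### The two implications -/

/-- Strictness of the hypothesis provides a reparametrization realizing `C`, to be evaluated at the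
preimages of the vertex parameters `0, 1/3, 2/3, 1`. -/
lemma vertices_of_frechetDist_lt {d : ℕ} {C : ℝ} (p a b q u v : Pt d)
    (h : frechetDist (polyline (n := 3) ![p, a, b, q]) (seg u v) < C) :
    ‖p - u‖ ≤ C ∧ ‖q - v‖ ≤ C ∧ ∃ s t : ℝ, 0 ≤ s ∧ s ≤ t ∧ t ≤ 1 ∧
      ‖a - seg u v s‖ ≤ C ∧ ‖b - seg u v t‖ ≤ C := by
  have : Nonempty {γ : ℝ → ℝ // IsReparam γ} :=
    ⟨⟨id, continuousOn_id, strictMonoOn_id, image_id _⟩⟩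
  obtain ⟨⟨γ, hγ⟩, hlt⟩ := exists_lt_of_ciInf_lt h
  have hle (s : ℝ) (hs : s ∈ Icc (0:ℝ) 1) :
      ‖polyline (n := 3) ![p, a, b, q] (γ s) - seg u v s‖ ≤ C :=
    (le_ciSup (bddAbove_dist ![p, a, b, q] u v hγ) ⟨s, hs⟩).trans hlt.le
  have v0 : polyline (n := 3) ![p, a, b, q] 0 = p := by
    simpa using polyline3_edge ![p, a, b, q] 0 (by norm_num) 0 le_rfl zero_le_one
  have v1 : polyline (n := 3) ![p, a, b, q] (1 / 3) = a := by
    simpa using polyline3_edge ![p, a, b, q] 1 (by norm_num) 0 le_rfl zero_le_one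
  have v2 : polyline (n := 3) ![p, a, b, q] (2 / 3) = b := by
    simpa using polyline3_edge ![p, a, b, q] 2 (by norm_num) 0 le_rfl zero_le_one
  have v3 : polyline (n := 3) ![p, a, b, q] 1 = q := by
    have := polyline3_edge ![p, a, b, q] 2 (by norm_num) 1 zero_le_one le_rfl
    norm_num at this
    exact this
  obtain ⟨s, hs, es⟩ : (1 / 3 : ℝ) ∈ γ '' Icc 0 1 := by
    rw [hγ.2.2]; constructor <;> norm_num
  obtain ⟨t, ht, et⟩ : (2 / 3 : ℝ) ∈ γ '' Icc 0 1 := by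
    rw [hγ.2.2]; constructor <;> norm_num
  refine ⟨?_, ?_, s, t, hs.1, ?_, ht.2, ?_, ?_⟩
  · simpa [hγ.map_zero, v0, seg] using hle 0 (by simp)
  · simpa [hγ.map_one, v3, seg] using hle 1 (by simp)
  · rw [← hγ.2.1.le_iff_le hs ht, es, et]; norm_num
  · simpa only [es, v1] using hle s hs
  · simpa only [et, v2] using hle t ht

lemma frechetDist_le_of_vertices {d : ℕ} {C x₁ x₂ : ℝ} (p a b q u v : Pt d)
    (h1 : 0 < x₁) (h2 : x₁ < x₂) (h3 : x₂ < 1) (hp : ‖p - u‖ ≤ C) (hq : ‖q - v‖ ≤ C)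
    (ha : ‖a - seg u v x₁‖ ≤ C) (hb : ‖b - seg u v x₂‖ ≤ C) :
    frechetDist (polyline (n := 3) ![p, a, b, q]) (seg u v) ≤ C := by
  obtain ⟨γ, hγ, hv⟩ := exists_reparam h1 h2 h3
  have hp' : ‖p - seg u v 0‖ ≤ C := by simpa [seg] using hp
  have hq' : ‖q - seg u v 1‖ ≤ C := by simpa [seg] using hq
  have hbdd : BddBelow (range fun γ : {γ : ℝ → ℝ // IsReparam γ} =>
      ⨆ s : Icc (0:ℝ) 1, ‖polyline (n := 3) ![p, a, b, q] (γ.1 s.1) - seg u v s.1‖) :=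
    ⟨0, by rintro _ ⟨γ, rfl⟩; exact Real.iSup_nonneg fun _ => norm_nonneg _⟩
  refine (ciInf_le hbdd ⟨γ, hγ⟩).trans (ciSup_le ?_)
  rintro ⟨s, hs⟩
  obtain ⟨θ, t0, t1, e⟩ := exists_piece h1 h2 h3 hs
  obtain ⟨w0, w1, w2⟩ := hv θ t0 t1
  simp only
  rcases e with rfl | rfl | rfl
  · rw [w0, polyline3_edge _ 0 (by norm_num) θ t0 t1]
    exact affine_bound t0 t1 hp' ha
  · rw [w1, polyline3_edge _ 1 (by norm_num) θ t0 t1]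
    exact affine_bound t0 t1 ha hb
  · rw [w2, polyline3_edge _ 2 (by norm_num) θ t0 t1]
    exact affine_bound t0 t1 hb hq'

lemma seg_perturb {d : ℕ} {u v x : Pt d} {s t η C : ℝ} (hst : |t - s| ≤ η)
    (h : ‖x - seg u v s‖ ≤ C) : ‖x - seg u v t‖ ≤ C + η * ‖v - u‖ := by
  have e : x - seg u v t = (x - seg u v s) - (t - s) • (v - u) := by
    simp only [seg]; module
  rw [e]
  refine (norm_sub_le _ _).trans (add_le_add h ?_)
  rw [norm_smul, Real.norm_eq_abs]
  gcongr

/-- Free-space characterization for a 3-segment polyline against a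
segment. -/
theorem stmt10 {d : ℕ} (Δ : ℝ) (hΔ : 0 < Δ) (p a b q u v : Pt d) :
    frechetDist (polyline (n := 3) ![p, a, b, q]) (seg u v) ≤ 2 * Δ ↔
      ‖p - u‖ ≤ 2 * Δ ∧ ‖q - v‖ ≤ 2 * Δ ∧
      ∃ lam lam' : ℝ, lam ∈ Icc (0:ℝ) 1 ∧ lam' ∈ Icc (0:ℝ) 1 ∧ lam ≤ lam' ∧
        ‖a - ((1 - lam) • u + lam • v)‖ ≤ 2 * Δ ∧
        ‖b - ((1 - lam') • u + lam' • v)‖ ≤ 2 * Δ := by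
  constructor
  · intro h
    have key (ε : ℝ) (hε : 0 < ε) := vertices_of_frechetDist_lt (C := 2 * Δ + ε) p a b q u v
      (by linarith)
    refine ⟨le_of_forall_pos_le_add fun ε hε => (key ε hε).1,
      le_of_forall_pos_le_add fun ε hε => (key ε hε).2.1, ?_⟩
    let K : Set (ℝ × ℝ) := (Icc 0 1 ×ˢ Icc 0 1) ∩ {z | z.1 ≤ z.2}
    have hK : IsCompact K := (isCompact_Icc.prod isCompact_Icc).inter_right
      (isClosed_le continuous_fst continuous_snd)
    have hne : K.Nonempty := ⟨(0, 0), by simp [K]⟩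
    let f : ℝ × ℝ → ℝ := fun z => max ‖a - seg u v z.1‖ ‖b - seg u v z.2‖
    have hf : Continuous f := by
      simp only [f, seg]; fun_prop
    obtain ⟨z, hz, hmin⟩ := hK.exists_isMinOn hne hf.continuousOn
    have hfz : f z ≤ 2 * Δ := by
      refine le_of_forall_pos_le_add fun ε hε => ?_
      obtain ⟨-, -, s, t, hs, hst, ht, hsa, htb⟩ := key ε hε
      have hmem : (s, t) ∈ K := ⟨⟨⟨hs, hst.trans ht⟩, ⟨hs.trans hst, ht⟩⟩, hst⟩
      exact (hmin hmem).trans (max_le hsa htb)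
    exact ⟨z.1, z.2, hz.1.1, hz.1.2, hz.2, (le_max_left _ _).trans hfz,
      (le_max_right _ _).trans hfz⟩
  · rintro ⟨hp, hq, s, t, hs, ht, hst, ha, hb⟩
    have key (η : ℝ) (h0 : 0 < η) (h1 : η < 1) :
        frechetDist (polyline (n := 3) ![p, a, b, q]) (seg u v) ≤ 2 * Δ + η * ‖v - u‖ := by
      have hn : 0 ≤ η * ‖v - u‖ := by positivity
      obtain ⟨s0, s1⟩ := hs
      obtain ⟨t0, t1⟩ := ht
      refine frechetDist_le_of_vertices (x₁ := (1 - η) * s + η * (1 / 3))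
        (x₂ := (1 - η) * t + η * (2 / 3)) p a b q u v (by nlinarith) (by nlinarith)
        (by nlinarith) (by linarith) (by linarith) (seg_perturb ?_ ha) (seg_perturb ?_ hb)
      · rw [abs_le]; constructor <;> nlinarith
      · rw [abs_le]; constructor <;> nlinarith
    refine le_of_forall_pos_le_add fun ε hε => ?_
    -- this `η` satisfies both `η < 1` and `η * ‖v - u‖ ≤ ε`
    have hd : 0 < ε + ‖v - u‖ + 1 := by positivity
    refine (key (ε / (ε + ‖v - u‖ + 1)) (by positivity) ?_).trans ?_
    · rw [div_lt_one hd]; linarith [norm_nonneg (v - u)]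
    · gcongr
      rw [div_mul_eq_mul_div, div_le_iff₀ hd]
      nlinarith [norm_nonneg (v - u)]
end
end

section
/- Bound on the number of weight-doubling iterations: let k ≥ 1, N ≥ k and i ≥ 0 be real numbers. If k · 2^{i/k} ≤ N · e^{i/(2k)}, then i ≤ 4k · log₂(N/k). -/
/-!
Taking logarithms, the hypothesis becomes `(i/k) * (log 2 - 1/2) ≤ log (N/k)`. Since
`log 2 > 2/3`, one has `log 2 ≤ 4 * (log 2 - 1/2)`, hence `(i/k) * log 2 ≤ 4 * log (N/k)`;
dividing by `log 2` turns the right-hand side into `4 * logb 2 (N/k)`.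
-/

open Set

noncomputable section

/-- Bound on the number of weight-doubling iterations. -/
theorem stmt15 (k N i : ℝ) (hk : 1 ≤ k) (hN : k ≤ N) (hi : 0 ≤ i)
    (h : k * (2:ℝ) ^ (i / k) ≤ N * Real.exp (i / (2 * k))) :
    i ≤ 4 * k * Real.logb 2 (N / k) := by
  have hk0 : 0 < k := by linarith
  have hN0 : 0 < N := by linarith
  have hlog := Real.log_le_log (by positivity) h
  rw [Real.log_mul hk0.ne' (by positivity), Real.log_mul hN0.ne' (Real.exp_ne_zero _),
    Real.log_exp, Real.log_rpow two_pos] at hlog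
  have hhalf : i / (2 * k) = i / k / 2 := by field_simp
  have hx : 0 ≤ i / k := by positivity
  have hL := Real.log_two_gt_d9
  have key : i / k * Real.log 2 ≤ 4 * Real.log (N / k) := by
    rw [Real.log_div hN0.ne' hk0.ne']
    nlinarith
  have hdiv : i / k ≤ 4 * Real.logb 2 (N / k) := by
    rw [Real.logb, ← mul_div_assoc, le_div_iff₀ (by linarith)]
    exact key
  rw [div_le_iff₀ hk0] at hdiv
  linarith
end
end
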